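/- Let k be a field with char k ≠ 2 and A a nonzero 3×3 Hermitian matrix over H, with diagonal entries r₁·1, r₂·1, r₃·1 (r_t ∈ k) and off-diagonal entries a_{t,u}. Then A has Jordan rank one if and only if r₁r₂ = det(a_{1,2}), r₁r₃ = det(a_{1,3}), r₂r₃ = det(a_{2,3}), r₁•a_{2,3} = a_{2,1}·a_{1,3}, a_{3,2}·a_{2,1} = r₂•a_{3,1}, and r₃•a_{2,1} = a_{2,3}·a_{3,1}. -/

import Mathlib

/-!
Both sides are equivalent to the single family of relations
`a_{i,j} · a_{j,l} = r_j • a_{i,l}` for all `i, j, l`. Taking for `B` the diagonal matrix unit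
`E_{j,j}` in `A·B·A = ⟨A,B⟩•A` gives exactly these relations, and the six displayed equations are
among them (the determinant equations being the case `i = l`, where `z · z̄ = Q(z)`). Conversely
conjugating the six equations, and using `z · z̄ = Q(z)` again, gives all of the relations
(`herm_rel`).

For the converse, `A·B·A` is expanded by linearity in `B`. A diagonal entry `s_j` contributes
`s_j • (a_{i,j} · a_{j,l}) = (r_j s_j) • a_{i,l}` to the entry `(i,l)`. An off-diagonal pair
`b = b_{j,m}`, `b̄ = b_{m,j}` contributes
`a_{i,j} · b · a_{m,l} + a_{i,m} · b̄ · a_{j,l}`, and `pair_rel` identifies this with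
`T(b · a_{m,j}) • a_{i,l}`, where `T` is the trace. As there are only three indices, either one of
`i, l` lies in `{j, m}`, or `i = l` is the third index. In the first case the trace identity
`z + z̄ = T(z)` reduces the claim to the relations; in the second the sum has the form `z + z̄`
and is a trace, which cyclicity of `T` evaluates.
-/

open Matrix

/-- 2×2 matrices over `k`: the split quaternions, with conjugation `adjugate`
and norm `det`. -/
abbrev M2 (k : Type*) [Field k] := Matrix (Fin 2) (Fin 2) k

variable {k : Type*} [Field k] {n : ℕ}

/-- A matrix with entries in `H = M₂(k)` is Hermitian if `a_{u,t} = adjugate (a_{t,u})`. -/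
def IsHerm (A : Matrix (Fin n) (Fin n) (M2 k)) : Prop :=
  ∀ t u, A u t = (A t u).adjugate

/-- The scalar pairing `⟨A,B⟩` on Hermitian matrices:
`Σ_{t<u} (Q(a_{t,u}+b_{t,u}) − Q(a_{t,u}) − Q(b_{t,u})) + Σ_t r_t s_t`, where
`r_t, s_t` are the scalars on the diagonals. -/
def jip (A B : Matrix (Fin n) (Fin n) (M2 k)) : k :=
  (∑ p ∈ Finset.univ.filter (fun p : Fin n × Fin n => p.1 < p.2),
      ((A p.1 p.2 + B p.1 p.2).det - (A p.1 p.2).det - (B p.1 p.2).det))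
    + ∑ t, (A t t 0 0) * (B t t 0 0)

/-- A nonzero Hermitian matrix `A` has Jordan rank one if `A·B·A = ⟨A,B⟩•A`
for every Hermitian `B`. -/
def JordanRankOne (A : Matrix (Fin n) (Fin n) (M2 k)) : Prop :=
  A ≠ 0 ∧ ∀ B : Matrix (Fin n) (Fin n) (M2 k), IsHerm B → A * B * A = jip A B • A

/-- `L_A : Hⁿ → Hⁿ`, `(x_u) ↦ (Σ_u a_{t,u}·x_u)_t`, as a `k`-linear map. -/
def LA (A : Matrix (Fin n) (Fin n) (M2 k)) : (Fin n → M2 k) →ₗ[k] (Fin n → M2 k) where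
  toFun x := fun t => ∑ u, A t u * x u
  map_add' a b := by
    funext t
    simp [mul_add, Finset.sum_add_distrib]
  map_smul' c a := by
    funext t
    simp [Matrix.mul_smul, Finset.smul_sum]

theorem mul_adj_two (x : M2 k) : x * x.adjugate = x.det • (1 : M2 k) := Matrix.mul_adjugate x

theorem add_adj_two (x : M2 k) : x + x.adjugate = x.trace • (1 : M2 k) := by
  ext i j
  fin_cases i <;> fin_cases j <;> simp [Matrix.adjugate_fin_two, Matrix.trace_fin_two, add_comm]

theorem adj_adj_two (x : M2 k) : x.adjugate.adjugate = x := by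
  simp [Matrix.adjugate_fin_two, ← Matrix.eta_fin_two]

theorem adj_smul_two (c : k) (x : M2 k) : (c • x).adjugate = c • x.adjugate := by
  simp [Matrix.adjugate_smul]

/-- The polarized norm is `(x, y) ↦ T(y · x̄)`. -/
theorem polar_two (x y : M2 k) :
    (x + y).det - x.det - y.det = (y * x.adjugate).trace := by
  simp [Matrix.adjugate_fin_two, Matrix.trace_fin_two, Matrix.det_fin_two, Matrix.mul_apply,
    Fin.sum_univ_two]
  ring

/-- A self-conjugate `2 × 2` matrix is scalar when `2 ≠ 0`: its off-diagonal entries satisfy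
`x = -x`. -/
theorem herm_diag (hchar : (2 : k) ≠ 0) {A : Matrix (Fin n) (Fin n) (M2 k)}
    (hA : IsHerm A) (t : Fin n) : A t t = (A t t 0 0) • (1 : M2 k) := by
  have h := hA t t
  rw [Matrix.adjugate_fin_two] at h
  have h01 := congrFun (congrFun h 0) 1
  have h10 := congrFun (congrFun h 1) 0
  have h11 := congrFun (congrFun h 1) 1
  simp only [Matrix.of_apply, Matrix.cons_val', Matrix.cons_val_zero, Matrix.cons_val_one,
    Matrix.cons_val_fin_one] at h01 h10 h11
  have e01 : A t t 0 1 = 0 := by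
    have : (2 : k) * A t t 0 1 = 0 := by linear_combination h01
    simpa [hchar] using this
  have e10 : A t t 1 0 = 0 := by
    have : (2 : k) * A t t 1 0 = 0 := by linear_combination h10
    simpa [hchar] using this
  ext i j
  fin_cases i <;> fin_cases j <;> simp [e01, e10, h11]

theorem jip_three {A B : Matrix (Fin 3) (Fin 3) (M2 k)} (hA : IsHerm A) :
    jip A B = (B 0 1 * A 1 0).trace + (B 0 2 * A 2 0).trace + (B 1 2 * A 2 1).trace
      + (A 0 0 0 0 * B 0 0 0 0 + A 1 1 0 0 * B 1 1 0 0 + A 2 2 0 0 * B 2 2 0 0) := by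
  have hs : (Finset.univ.filter (fun p : Fin 3 × Fin 3 => p.1 < p.2))
      = {(0, 1), (0, 2), (1, 2)} := by decide
  rw [jip, hs, Finset.sum_insert (by decide), Finset.sum_insert (by decide),
    Finset.sum_singleton, Fin.sum_univ_three]
  simp only [polar_two, ← hA 0 1, ← hA 0 2, ← hA 1 2]
  ring

/-- The six equations generate, by conjugation, all relations `a_{i,j} · a_{j,l} = r_j • a_{i,l}`. -/
theorem herm_rel (hchar : (2 : k) ≠ 0) {A : Matrix (Fin 3) (Fin 3) (M2 k)} (hA : IsHerm A)
    (h1 : A 0 0 0 0 * A 1 1 0 0 = (A 0 1).det)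
    (h2 : A 0 0 0 0 * A 2 2 0 0 = (A 0 2).det)
    (h3 : A 1 1 0 0 * A 2 2 0 0 = (A 1 2).det)
    (h4 : (A 0 0 0 0) • A 1 2 = A 1 0 * A 0 2)
    (h5 : A 2 1 * A 1 0 = (A 1 1 0 0) • A 2 0)
    (h6 : (A 2 2 0 0) • A 1 0 = A 1 2 * A 2 0) (i j l : Fin 3) :
    A i j * A j l = (A j j 0 0) • A i l := by
  -- conjugation reverses a relation
  have conj : ∀ i j l : Fin 3, A i j * A j l = (A j j 0 0) • A i l →
      A l j * A j i = (A j j 0 0) • A l i := by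
    intro i j l h
    rw [hA j l, hA i j, hA i l, ← Matrix.adjugate_mul_distrib, h, adj_smul_two]
  have norm : ∀ i j : Fin 3, A i i 0 0 * A j j 0 0 = (A i j).det →
      A i j * A j i = (A j j 0 0) • A i i := by
    intro i j h
    rw [hA i j, mul_adj_two, ← h, herm_diag hchar hA i]
    simp [smul_smul, mul_comm]
  have det_symm : ∀ i j : Fin 3, (A j i).det = (A i j).det := by
    intro i j
    rw [hA i j, Matrix.det_adjugate]; simp
  have left : ∀ j l : Fin 3, A j j * A j l = (A j j 0 0) • A j l := by
    intro j l
    conv_lhs => rw [herm_diag hchar hA j]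
    simp
  have right : ∀ i j : Fin 3, A i j * A j j = (A j j 0 0) • A i j := by
    intro i j
    conv_lhs => rw [herm_diag hchar hA j]
    simp
  have n10 := norm 1 0 (by rw [det_symm 0 1, ← h1, mul_comm])
  have n20 := norm 2 0 (by rw [det_symm 0 2, ← h2, mul_comm])
  have n21 := norm 2 1 (by rw [det_symm 1 2, ← h3, mul_comm])
  fin_cases i <;> fin_cases j <;> fin_cases l
  all_goals first
    | exact left _ _
    | exact right _ _
    | exact norm 0 1 h1
    | exact norm 0 2 h2
    | exact norm 1 2 h3
    | exact n10
    | exact n20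
    | exact n21
    | exact h4.symm
    | exact h5
    | exact h6.symm
    | exact conj _ _ _ h4.symm
    | exact conj _ _ _ h5
    | exact conj _ _ _ h6.symm

/-- The contribution of an off-diagonal pair `b`, `b̄` of entries of `B` to `A·B·A`. -/
theorem pair_rel (hchar : (2 : k) ≠ 0) {A : Matrix (Fin 3) (Fin 3) (M2 k)} (hA : IsHerm A)
    (hP : ∀ i j l : Fin 3, A i j * A j l = (A j j 0 0) • A i l)
    (b : M2 k) (i l j m : Fin 3) (hjm : j ≠ m) :
    A i j * b * A m l + A i m * b.adjugate * A j l = (b * A m j).trace • A i l := by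
  have E1 : b * A m j + A j m * b.adjugate = (b * A m j).trace • (1 : M2 k) := by
    rw [← add_adj_two, Matrix.adjugate_mul_distrib, ← hA m j]
  have E2 : A m j * b + b.adjugate * A j m = (b * A m j).trace • (1 : M2 k) := by
    rw [Matrix.trace_mul_comm, ← add_adj_two, Matrix.adjugate_mul_distrib, ← hA m j]
  by_cases hij : i = j
  · subst hij
    have h := congrArg (· * A i l) E1
    simp only [add_mul, Matrix.smul_mul, one_mul] at h
    rw [← h, mul_assoc b, hP m i l]
    congr 1
    conv_lhs => rw [herm_diag hchar hA i]
    simp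
  by_cases him : i = m
  · subst him
    have h := congrArg (· * A i l) E2
    simp only [add_mul, Matrix.smul_mul, one_mul] at h
    rw [← h, mul_assoc b.adjugate, hP j i l]
    congr 1
    conv_lhs => rw [herm_diag hchar hA i]
    simp
  by_cases hlj : l = j
  · subst hlj
    have h := congrArg (A i l * ·) E1
    simp only [mul_add, Matrix.mul_smul, mul_one] at h
    rw [← h, ← mul_assoc, ← mul_assoc, hP i l m]
    congr 1
    conv_lhs => rw [herm_diag hchar hA l]
    simp
  by_cases hlm : l = m
  · subst hlm
    have h := congrArg (A i l * ·) E2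
    simp only [mul_add, Matrix.mul_smul, mul_one] at h
    rw [← h, ← mul_assoc, ← mul_assoc, hP i l j]
    congr 1
    conv_lhs => rw [herm_diag hchar hA l]
    simp
  -- only the third index is left for both `i` and `l`
  have hil : l = i := by omega
  subst hil
  have h : A l m * b.adjugate * A j l = (A l j * b * A m l).adjugate := by
    rw [Matrix.adjugate_mul_distrib, Matrix.adjugate_mul_distrib, ← hA m l, ← hA l j, mul_assoc]
  rw [h, add_adj_two, mul_assoc, Matrix.trace_mul_comm, mul_assoc, hP m l j,
    herm_diag hchar hA l]
  simp [smul_smul, mul_comm]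

/-- The rank-one condition for the diagonal matrix unit `B = E_{j,j}`, read at the entry `(i,l)`. -/
theorem rank_one_rel {A : Matrix (Fin 3) (Fin 3) (M2 k)} (hA : IsHerm A)
    (h : JordanRankOne A) (i j l : Fin 3) : A i j * A j l = (A j j 0 0) • A i l := by
  have hB : IsHerm (Matrix.single j j (1 : M2 k) : Matrix (Fin 3) (Fin 3) (M2 k)) := by
    intro t u
    fin_cases j <;> fin_cases t <;> fin_cases u <;> simp
  have e := congrFun (congrFun (h.2 _ hB) i) l
  have hj : jip A (Matrix.single j j (1 : M2 k)) = A j j 0 0 := by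
    rw [jip_three hA]
    fin_cases j <;> simp
  rw [hj] at e
  rw [Matrix.smul_apply] at e
  rw [← e]
  fin_cases j <;> simp [Matrix.mul_apply (M := A), Matrix.mul_apply (N := A),
    Fin.sum_univ_three, Matrix.single_apply]

theorem stmt14 (k : Type*) [Field k] (hchar : (2 : k) ≠ 0)
    (A : Matrix (Fin 3) (Fin 3) (M2 k)) (hA : IsHerm A) (hA0 : A ≠ 0) :
    JordanRankOne A ↔
      (A 0 0 0 0 * A 1 1 0 0 = (A 0 1).det ∧
       A 0 0 0 0 * A 2 2 0 0 = (A 0 2).det ∧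
       A 1 1 0 0 * A 2 2 0 0 = (A 1 2).det ∧
       (A 0 0 0 0) • A 1 2 = A 1 0 * A 0 2 ∧
       A 2 1 * A 1 0 = (A 1 1 0 0) • A 2 0 ∧
       (A 2 2 0 0) • A 1 0 = A 1 2 * A 2 0) := by
  constructor
  · intro h
    have hP := rank_one_rel hA h
    have hdet : ∀ i j : Fin 3, A i i 0 0 * A j j 0 0 = (A i j).det := by
      intro i j
      have e := hP i j i
      rw [hA i j, mul_adj_two] at e
      have e' := congrFun (congrFun e 0) 0
      simp only [Matrix.smul_apply, Matrix.one_apply_eq, smul_eq_mul, mul_one] at e'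
      rw [e', mul_comm]
    exact ⟨hdet 0 1, hdet 0 2, hdet 1 2, (hP 1 0 2).symm, hP 2 1 0, (hP 1 2 0).symm⟩
  · rintro ⟨h1, h2, h3, h4, h5, h6⟩
    have hP := herm_rel hchar hA h1 h2 h3 h4 h5 h6
    refine ⟨hA0, fun B hB => ?_⟩
    ext1 i l
    have p01 := pair_rel hchar hA hP (B 0 1) i l 0 1 (by decide)
    have p02 := pair_rel hchar hA hP (B 0 2) i l 0 2 (by decide)
    have p12 := pair_rel hchar hA hP (B 1 2) i l 1 2 (by decide)
    rw [← hB 0 1] at p01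
    rw [← hB 0 2] at p02
    rw [← hB 1 2] at p12
    have d : ∀ j : Fin 3, A i j * B j j * A j l = (A j j 0 0 * B j j 0 0) • A i l := by
      intro j
      rw [herm_diag hchar hB j]
      simp [hP i j l, smul_smul, mul_comm]
    rw [Matrix.smul_apply, jip_three hA]
    simp only [add_smul]
    rw [← p01, ← p02, ← p12, ← d 0, ← d 1, ← d 2]
    simp only [Matrix.mul_apply (M := A * B), Matrix.mul_apply (M := A) (N := B),
      Fin.sum_univ_three, add_mul]
    abel
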